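/- Let F: A → C be an accessible functor and let K be a full subcategory of C that is closed under isomorphisms and is the full image of an accessible functor. Then the full preimage F⁻¹K (the full subcategory of A on objects X with FX ∈ K) is also closed under isomorphisms and is the full image of an accessible functor. -/

import Mathlib

universe v u₁ u₂ u₃

open CategoryTheory Limits Opposite

namespace Paper

/-- a preorder is `κ`-directed if every subset of cardinality `< κ` has an upper bound -/
def IsCardinalDirected (κ : Cardinal.{v}) (J : Type v) [Preorder J] : Prop :=
  ∀ S : Set J, Cardinal.mk S < κ → ∃ j : J, ∀ s ∈ S, s ≤ j

/-- an object `X` is `κ`-presentable if `Hom(X,-)` preserves `κ`-directed colimits -/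
def IsPresentableObj (κ : Cardinal.{v}) {K : Type u₁} [Category.{v} K] (X : K) : Prop :=
  ∀ (J : Type v) [Preorder J], IsCardinalDirected κ J →
    Nonempty (PreservesColimitsOfShape J (coyoneda.obj (op X)))

/-- `X` is a `κ`-directed colimit of objects from the set `A` -/
def IsDirectedColimitFrom (κ : Cardinal.{v}) {K : Type u₁} [Category.{v} K]
    (A : Set K) (X : K) : Prop :=
  ∃ (J : Type v) (pre : Preorder J),
    letI := pre
    IsCardinalDirected κ J ∧
      ∃ (D : J ⥤ K) (c : Cocone D), Nonempty (IsColimit c) ∧ c.pt = X ∧ ∀ j : J, D.obj j ∈ A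

/-- `κ`-accessible category -/
structure IsCardinalAccessible (κ : Cardinal.{v}) (K : Type u₁) [Category.{v} K] : Prop where
  isRegular : κ.IsRegular
  hasDirectedColimits :
    ∀ (J : Type v) [Preorder J], IsCardinalDirected κ J → HasColimitsOfShape J K
  generators : ∃ A : Set K, Small.{v} A ∧ (∀ X ∈ A, IsPresentableObj κ X) ∧
    ∀ X : K, IsDirectedColimitFrom κ A X

/-- `F` preserves `κ`-directed colimits -/
def PreservesCardinalDirectedColimits (κ : Cardinal.{v}) {A : Type u₁} [Category.{v} A]
    {C : Type u₂} [Category.{v} C] (F : A ⥤ C) : Prop :=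
  ∀ (J : Type v) [Preorder J], IsCardinalDirected κ J →
    Nonempty (PreservesColimitsOfShape J F)

/-- accessible functor: for some regular cardinal `κ`, both categories are
`κ`-accessible and `F` preserves `κ`-directed colimits -/
def IsAccessibleFunctor {A : Type u₁} [Category.{v} A] {C : Type u₂} [Category.{v} C]
    (F : A ⥤ C) : Prop :=
  ∃ κ : Cardinal.{v}, IsCardinalAccessible κ A ∧ IsCardinalAccessible κ C ∧
    PreservesCardinalDirectedColimits κ F

section Closure

variable {P : Type v} [PartialOrder P] (κ : Cardinal.{v}) [Fact κ.IsRegular]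

/-- the shapes used to generate a closed subset -/
def clShape (U₀ : Set P) : Option U₀ ⊕ Bool → Type v
  | Sum.inl _ => PEmpty
  | Sum.inr true => κ.ord.ToType
  | Sum.inr false => ULift Bool

/-- evaluation of formal terms -/
def clEval (U₀ : Set P) (p₀ : P) (ub : (κ.ord.ToType → P) → P) (m : P → P → P) :
    (Σ a, clShape κ U₀ a → P) → P
  | ⟨Sum.inl none, _⟩ => p₀
  | ⟨Sum.inl (some x), _⟩ => x
  | ⟨Sum.inr true, h⟩ => ub h
  | ⟨Sum.inr false, h⟩ => m (h ⟨true⟩) (h ⟨false⟩)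

/-- the good subsets -/
structure IsGood (μ : Cardinal.{v}) (R : P → P → P → Prop) (U : Set P) : Prop where
  card : Cardinal.mk U ≤ μ
  filt : IsCardinalFiltered U κ
  closed : ∀ p ∈ U, ∀ p' ∈ U, ∃ z ∈ U, R p p' z

lemma exists_isGood [IsCardinalFiltered P κ] (μ : Cardinal.{v}) (hκμ : κ ≤ μ)
    (hμ : μ ^ κ ≤ μ) (R : P → P → P → Prop) (hR : ∀ p p', ∃ z, R p p' z)
    (U₀ : Set P) (hU₀ : Cardinal.mk U₀ ≤ μ) :
    ∃ U, U₀ ⊆ U ∧ IsGood κ μ R U := by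
  have hκ : κ.IsRegular := Fact.out
  have hκ0 := hκ.aleph0_le
  have hμ0 := hκ0.trans hκμ
  choose m hm using hR
  have hub : ∀ h : κ.ord.ToType → P, ∃ z : P, Cardinal.mk (Set.range h) < κ → ∀ d, h d ≤ z := by
    intro h
    by_cases hh : Cardinal.mk (Set.range h) < κ
    · have hh' := (hasCardinalLT_iff_cardinal_mk_lt _ _).2 hh
      refine ⟨IsCardinalFiltered.max (fun x : Set.range h => (x : P)) hh', fun _ d => ?_⟩
      exact leOfHom (IsCardinalFiltered.toMax (fun x : Set.range h => (x : P)) hh' ⟨h d, d, rfl⟩)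
    · exact ⟨(IsCardinalFiltered.nonempty P κ).some, fun h' => absurd h' hh⟩
  choose ub hub using hub
  let p₀ : P := (IsCardinalFiltered.nonempty P κ).some
  let ev : WType (clShape κ U₀) → P := WType.elim P (clEval κ U₀ p₀ ub m)
  refine ⟨Set.range ev, ?_, ?_, ?_, ?_⟩
  · intro x hx
    exact ⟨WType.mk (Sum.inl (some ⟨x, hx⟩)) (fun y => nomatch y), rfl⟩
  · refine Cardinal.mk_range_le.trans (WType.cardinalMk_le_of_le ?_)
    have h1 : ∀ a, μ ^ Cardinal.mk (clShape κ U₀ a) ≤ μ := by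
      have key : ∀ c ≤ κ, μ ^ c ≤ μ := fun c hc =>
        (Cardinal.power_le_power_left (Cardinal.aleph0_pos.trans_le hμ0).ne' hc).trans hμ
      rintro (a | (_ | _)) <;> apply key
      · simp [clShape]
      · simp only [clShape, Cardinal.mk_fintype]
        exact (Cardinal.natCast_lt_aleph0).le.trans hκ0
      · simp [clShape]
    refine (Cardinal.sum_le_sum _ _ h1).trans ?_
    simp only [Cardinal.sum_const', Cardinal.mk_sum, Cardinal.mk_option]
    refine Cardinal.mul_le_of_le hμ0 ?_ le_rfl
    refine Cardinal.add_le_of_le hμ0 ?_ ?_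
    · simp only [Cardinal.lift_uzero]
      exact Cardinal.add_le_of_le hμ0 hU₀ (Cardinal.one_le_aleph0.trans hμ0)
    · simp only [Cardinal.mk_fintype, Cardinal.lift_natCast]
      exact (Cardinal.natCast_lt_aleph0).le.trans hμ0
  · apply isCardinalFiltered_preorder
    intro K s hK
    cases isEmpty_or_nonempty K with
    | inl h =>
      exact ⟨⟨_, WType.mk (Sum.inl none) (fun y => nomatch y), rfl⟩, fun k => isEmptyElim k⟩
    | inr h =>
      have : Cardinal.mk K ≤ Cardinal.mk κ.ord.ToType := by simpa using hK.le
      obtain ⟨e⟩ := this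
      let r : κ.ord.ToType → K := Function.invFun e
      have hr : ∀ k, r (e k) = k := Function.leftInverse_invFun e.injective
      choose t ht using fun k => (s k).2
      refine ⟨⟨_, WType.mk (Sum.inr true) (fun d => t (r d)), rfl⟩, fun k => ?_⟩
      have h2 : ∀ d, ev (t (r d)) ≤ ub (fun d => ev (t (r d))) := by
        apply hub (fun d => ev (t (r d)))
        refine lt_of_le_of_lt (Cardinal.mk_le_mk_of_subset (t := Set.range (fun k => ev (t k))) ?_)
          (Cardinal.mk_range_le.trans_lt hK)
        rintro _ ⟨d, rfl⟩
        exact ⟨r d, rfl⟩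
      have h3 := h2 (e k)
      rw [hr, ht] at h3
      exact h3
  · rintro _ ⟨a, rfl⟩ _ ⟨b, rfl⟩
    exact ⟨_, ⟨WType.mk (Sum.inr false) (fun x => if x.down then a else b), rfl⟩, hm _ _⟩

/-- the poset of good subsets -/
abbrev GoodSet (μ : Cardinal.{v}) (R : P → P → P → Prop) := { U : Set P // IsGood κ μ R U }

lemma goodSet_exists_mem [IsCardinalFiltered P κ] (μ : Cardinal.{v}) (hκμ : κ ≤ μ)
    (hμ : μ ^ κ ≤ μ) (R : P → P → P → Prop) (hR : ∀ p p', ∃ z, R p p' z) (p : P) :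
    ∃ U : GoodSet κ μ R, p ∈ U.1 := by
  have hκ : κ.IsRegular := Fact.out
  obtain ⟨U, h1, h2⟩ := exists_isGood κ μ hκμ hμ R hR {p}
    (by simpa using Cardinal.one_le_aleph0.trans (hκ.aleph0_le.trans hκμ))
  exact ⟨⟨U, h2⟩, h1 rfl⟩

lemma goodSet_filtered [IsCardinalFiltered P κ] (μ : Cardinal.{v}) (hκμ : κ ≤ μ)
    (hμ : μ ^ κ ≤ μ) (R : P → P → P → Prop) (hR : ∀ p p', ∃ z, R p p' z)
    [Fact (Order.succ μ).IsRegular] :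
    IsCardinalFiltered (GoodSet κ μ R) (Order.succ μ) := by
  have hκ : κ.IsRegular := Fact.out
  have hμ0 := hκ.aleph0_le.trans hκμ
  apply isCardinalFiltered_preorder
  intro K s hK
  obtain ⟨U, h1, h2⟩ := exists_isGood κ μ hκμ hμ R hR (⋃ k, (s k).1) (by
    refine (Cardinal.mk_iUnion_le_sum_mk).trans ?_
    refine (Cardinal.sum_le_sum _ (fun _ => μ) (fun k => (s k).2.card)).trans ?_
    simp only [Cardinal.sum_const']
    exact Cardinal.mul_le_of_le hμ0 (Order.lt_succ_iff.1 hK) le_rfl)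
  exact ⟨⟨U, h2⟩, fun k => (Set.subset_iUnion (fun k => (s k).1) k).trans h1⟩

end Closure


set_option linter.unusedVariables false

section Sub

variable {P : Type v} [PartialOrder P] {A : Type u₁} [Category.{v} A]

/-- inclusion functor of a subset -/
abbrev inclF (U : Set P) : U ⥤ P := Monotone.functor (f := (Subtype.val : U → P)) (fun _ _ h => h)

/-- `X` is the colimit of the restriction of `D` to `U` -/
structure IsSub (D : P ⥤ A) (U : Set P) (X : A) (ι : ∀ p, p ∈ U → (D.obj p ⟶ X)) : Prop where
  w : ∀ (p q : P) (hp : p ∈ U) (hq : q ∈ U) (f : p ⟶ q), D.map f ≫ ι q hq = ι p hp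
  ext : ∀ {Y : A} (f g : X ⟶ Y), (∀ p hp, ι p hp ≫ f = ι p hp ≫ g) → f = g
  desc : ∀ {Y : A} (t : ∀ p, p ∈ U → (D.obj p ⟶ Y)),
    (∀ (p q : P) (hp : p ∈ U) (hq : q ∈ U) (f : p ⟶ q), D.map f ≫ t q hq = t p hp) →
    ∃ g : X ⟶ Y, ∀ p hp, ι p hp ≫ g = t p hp

/-- cocone from a family -/
def famCocone (D : P ⥤ A) (U : Set P) (X : A) (ι : ∀ p, p ∈ U → (D.obj p ⟶ X))
    (w : ∀ (p q : P) (hp : p ∈ U) (hq : q ∈ U) (f : p ⟶ q), D.map f ≫ ι q hq = ι p hp) :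
    Cocone (inclF U ⋙ D) where
  pt := X
  ι :=
    { app := fun p => ι p.1 p.2
      naturality := fun p q f => (w p.1 q.1 p.2 q.2 ((inclF U).map f)).trans
        (Category.comp_id _).symm }

lemma IsSub.of_isColimit (D : P ⥤ A) (U : Set P) (c : Cocone (inclF U ⋙ D)) (hc : IsColimit c) :
    IsSub D U c.pt (fun p hp => c.ι.app ⟨p, hp⟩) where
  w p q hp hq f := c.w (show (⟨p, hp⟩ : U) ⟶ ⟨q, hq⟩ from homOfLE (leOfHom f))
  ext f g h := hc.hom_ext (fun p => h p.1 p.2)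
  desc t w := ⟨hc.desc (famCocone D U _ t w), fun p hp => hc.fac (famCocone D U _ t w) ⟨p, hp⟩⟩

/-- converse -/
noncomputable def IsSub.isColimit {D : P ⥤ A} {U : Set P} {X : A} {ι : ∀ p, p ∈ U → (D.obj p ⟶ X)}
    (h : IsSub D U X ι) : IsColimit (famCocone D U X ι h.w) where
  desc s := (h.desc (fun p hp => s.ι.app ⟨p, hp⟩) (fun p q hp hq f =>
    s.w (show (⟨p, hp⟩ : U) ⟶ ⟨q, hq⟩ from homOfLE (leOfHom f)))).choose
  fac s j := (h.desc (fun p hp => s.ι.app ⟨p, hp⟩) (fun p q hp hq f =>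
    s.w (show (⟨p, hp⟩ : U) ⟶ ⟨q, hq⟩ from homOfLE (leOfHom f)))).choose_spec j.1 j.2
  uniq s m hm := h.ext _ _ (fun p hp => (hm ⟨p, hp⟩).trans
    ((h.desc (fun p hp => s.ι.app ⟨p, hp⟩) (fun p q hp hq f =>
    s.w (show (⟨p, hp⟩ : U) ⟶ ⟨q, hq⟩ from homOfLE (leOfHom f)))).choose_spec p hp).symm)

lemma IsSub.map {D : P ⥤ A} {U : Set P} {X : A} {ι : ∀ p, p ∈ U → (D.obj p ⟶ X)}
    (h : IsSub D U X ι) {C : Type u₂} [Category.{v} C] (F : A ⥤ C)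
    [PreservesColimitsOfShape U F] :
    IsSub (D ⋙ F) U (F.obj X) (fun p hp => F.map (ι p hp)) :=
  IsSub.of_isColimit (D ⋙ F) U (F.mapCocone (famCocone D U X ι h.w))
    (isColimitOfPreserves F h.isColimit)

lemma exists_isSub (D : P ⥤ A) (U : Set P) [HasColimitsOfShape U A] :
    ∃ X ι, IsSub D U X ι :=
  ⟨_, _, IsSub.of_isColimit D U _ (colimit.isColimit (inclF U ⋙ D))⟩

section

variable {D : P ⥤ A} {Pr : Set P → Prop} {X : Subtype Pr → A}
  {ι : ∀ U : Subtype Pr, ∀ p, p ∈ U.1 → (D.obj p ⟶ X U)}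
  (h : ∀ U, IsSub D U.1 (X U) (ι U))

lemma subMap_exists (h : ∀ U, IsSub D U.1 (X U) (ι U)) {U V : Subtype Pr} (hUV : U.1 ⊆ V.1) :
    ∃ g : X U ⟶ X V, ∀ p (hp : p ∈ U.1), ι U p hp ≫ g = ι V p (hUV hp) :=
  (h U).desc (fun p hp => ι V p (hUV hp)) (fun p q hp hq f => (h V).w p q _ _ f)

/-- transition map -/
noncomputable def subMap {U V : Subtype Pr} (hUV : U.1 ⊆ V.1) : X U ⟶ X V :=
  (subMap_exists h hUV).choose

lemma ι_subMap {U V : Subtype Pr} (hUV : U.1 ⊆ V.1) (p : P) (hp : p ∈ U.1) :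
    ι U p hp ≫ subMap h hUV = ι V p (hUV hp) :=
  (subMap_exists h hUV).choose_spec p hp

/-- the functor -/
@[simps]
noncomputable def subF : Subtype Pr ⥤ A where
  obj U := X U
  map {U V} f := subMap h (leOfHom f)
  map_id U := (h U).ext _ _ (fun p hp => by rw [ι_subMap, Category.comp_id])
  map_comp f g := (h _).ext _ _ (fun p hp => by rw [ι_subMap, ← Category.assoc, ι_subMap, ι_subMap])

variable (c : Cocone D)

lemma subTo_exists (h : ∀ U, IsSub D U.1 (X U) (ι U)) (c : Cocone D) (U : Subtype Pr) :
    ∃ g : X U ⟶ c.pt, ∀ p (hp : p ∈ U.1), ι U p hp ≫ g = c.ι.app p :=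
  (h U).desc (fun p hp => c.ι.app p) (fun p q hp hq f => c.w f)

/-- map to the colimit -/
noncomputable def subTo (U : Subtype Pr) : X U ⟶ c.pt := (subTo_exists h c U).choose

lemma ι_subTo (U : Subtype Pr) (p : P) (hp : p ∈ U.1) :
    ι U p hp ≫ subTo h c U = c.ι.app p :=
  (subTo_exists h c U).choose_spec p hp


lemma subMap_subTo {U V : Subtype Pr} (hUV : U.1 ⊆ V.1) :
    subMap h hUV ≫ subTo h c V = subTo h c U :=
  (h U).ext _ _ (fun p hp => by rw [← Category.assoc, ι_subMap, ι_subTo, ι_subTo])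

/-- the cocone -/
@[simps]
noncomputable def subC : Cocone (subF h) where
  pt := c.pt
  ι :=
    { app := fun U => subTo h c U
      naturality := fun U V f => (subMap_subTo h c (leOfHom f)).trans (Category.comp_id _).symm }

lemma sub_glue_key [IsFiltered (Subtype Pr)] {Y : A} (s : ∀ U : Subtype Pr, X U ⟶ Y)
    (hs : ∀ (U V : Subtype Pr) (hUV : U.1 ⊆ V.1), subMap h hUV ≫ s V = s U)
    (U V : Subtype Pr) (p : P) (hp : p ∈ U.1) (hp' : p ∈ V.1) :
    ι U p hp ≫ s U = ι V p hp' ≫ s V := by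
  have h1 : U.1 ⊆ (IsFiltered.max U V).1 := leOfHom (IsFiltered.leftToMax U V)
  have h2 : V.1 ⊆ (IsFiltered.max U V).1 := leOfHom (IsFiltered.rightToMax U V)
  rw [← hs _ _ h1, ← hs _ _ h2, ← Category.assoc, ι_subMap, ← Category.assoc, ι_subMap]

lemma sub_glue (hc : IsColimit c) [IsFiltered (Subtype Pr)]
    (hcov : ∀ p : P, ∃ U : Subtype Pr, p ∈ U.1) {Y : A} (s : ∀ U : Subtype Pr, X U ⟶ Y)
    (hs : ∀ (U V : Subtype Pr) (hUV : U.1 ⊆ V.1), subMap h hUV ≫ s V = s U) :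
    ∃ g : c.pt ⟶ Y, ∀ U, subTo h c U ≫ g = s U := by
  choose w hw using hcov
  have nat : ∀ (p q : P) (f : p ⟶ q), D.map f ≫ ι (w q) q (hw q) ≫ s (w q) =
      ι (w p) p (hw p) ≫ s (w p) := by
    intro p q f
    have h1 : p ∈ (IsFiltered.max (w p) (w q)).1 := leOfHom (IsFiltered.leftToMax (w p) (w q)) (hw p)
    have h2 : q ∈ (IsFiltered.max (w p) (w q)).1 :=
      leOfHom (IsFiltered.rightToMax (w p) (w q)) (hw q)
    rw [sub_glue_key h s hs (w p) _ p (hw p) h1, sub_glue_key h s hs (w q) _ q (hw q) h2,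
      ← Category.assoc, (h _).w p q h1 h2 f]
  let t : Cocone D :=
    { pt := Y
      ι :=
        { app := fun p => ι (w p) p (hw p) ≫ s (w p)
          naturality := fun p q f => (nat p q f).trans (Category.comp_id _).symm } }
  have fac : ∀ p, c.ι.app p ≫ hc.desc t = ι (w p) p (hw p) ≫ s (w p) := fun p => hc.fac t p
  refine ⟨hc.desc t, fun U => (h U).ext _ _ (fun p hp => ?_)⟩
  rw [← Category.assoc, ι_subTo]
  exact (fac p).trans (sub_glue_key h s hs _ _ p _ _)

lemma sub_ext (hc : IsColimit c)
    (hcov : ∀ p : P, ∃ U : Subtype Pr, p ∈ U.1) {Y : A} (f g : c.pt ⟶ Y)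
    (hfg : ∀ U, subTo h c U ≫ f = subTo h c U ≫ g) : f = g := by
  apply hc.hom_ext
  intro p
  obtain ⟨U, hU⟩ := hcov p
  rw [← ι_subTo h c U p hU, Category.assoc, hfg, Category.assoc]

lemma subC_isColimit (hc : IsColimit c) [IsFiltered (Subtype Pr)]
    (hcov : ∀ p : P, ∃ U : Subtype Pr, p ∈ U.1) : Nonempty (IsColimit (subC h c)) := by
  have ex (s : Cocone (subF h)) : ∃ g : c.pt ⟶ s.pt, ∀ U, subTo h c U ≫ g = s.ι.app U :=
    sub_glue h c hc hcov (fun U => s.ι.app U) (fun U V hUV => s.w (homOfLE hUV))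
  choose d hd using ex
  exact ⟨{
    desc := d
    fac := hd
    uniq := fun s m hm => sub_ext h c hc hcov _ _ (fun U => (hm U).trans (hd s U).symm) }⟩

end
end Sub

section Raise

lemma hasCardinalLT_arrow_of_set {P : Type v} [PartialOrder P] (U : Set P) (μ : Cardinal.{v})
    (hμ : Cardinal.aleph0 ≤ μ) (hU : Cardinal.mk U ≤ μ) :
    HasCardinalLT (Arrow U) (Order.succ μ) := by
  have h1 : HasCardinalLT (U × U) (Order.succ μ) := by
    rw [hasCardinalLT_iff_cardinal_mk_lt, Order.lt_succ_iff, Cardinal.mk_prod]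
    simp only [Cardinal.lift_id]
    exact Cardinal.mul_le_of_le hμ hU hU
  refine h1.of_injective (fun f : Arrow U => (f.left, f.right)) ?_
  rintro ⟨a, b, f⟩ ⟨a', b', f'⟩ h
  obtain ⟨rfl, rfl⟩ := Prod.mk.inj h
  obtain rfl : f = f' := Subsingleton.elim _ _
  rfl

lemma IsSub.isCardinalPresentable {P : Type v} [PartialOrder P] {A : Type u₁} [Category.{v} A]
    {D : P ⥤ A} {U : Set P} {X : A} {ι : ∀ p, p ∈ U → (D.obj p ⟶ X)}
    (h : IsSub D U X ι) (μ : Cardinal.{v}) [Fact (Order.succ μ).IsRegular]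
    (hμ : Cardinal.aleph0 ≤ μ) (hU : Cardinal.mk U ≤ μ)
    (hD : ∀ p ∈ U, IsCardinalPresentable (D.obj p) (Order.succ μ)) :
    IsCardinalPresentable X (Order.succ μ) := by
  have : ∀ k, IsCardinalPresentable ((inclF U ⋙ D).obj k) (Order.succ μ) :=
    fun k => hD k.1 k.2
  exact isCardinalPresentable_of_isColimit _ h.isColimit (Order.succ μ)
    (hasCardinalLT_arrow_of_set U μ hμ hU)

/-- poset presentations -/
lemma exists_poset_presentation {A : Type u₁} [Category.{v} A] (κ : Cardinal.{v})
    [Fact κ.IsRegular] {Q : ObjectProperty A} (hQ : Q.IsCardinalFilteredGenerator κ) (X : A) :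
    ∃ (J : Type v) (_ : PartialOrder J) (_ : IsCardinalFiltered J κ) (D : J ⥤ A)
      (t : D ⟶ (Functor.const J).obj X),
      Nonempty (IsColimit (Cocone.mk X t)) ∧ ∀ j, Q (D.obj j) := by
  obtain ⟨J, _, _, ⟨p⟩⟩ := hQ.exists_colimitsOfShape X
  obtain ⟨α, _, _, T, _⟩ := IsCardinalFiltered.exists_cardinal_directed J κ
  refine ⟨α, inferInstance, inferInstance, T ⋙ p.diag, Functor.whiskerLeft T p.ι,
    ⟨(Functor.Final.isColimitWhiskerEquiv T _).symm p.isColimit⟩, fun j => p.prop_diag_obj _⟩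

lemma pow_le_aux {κ ν : Cardinal.{v}} (h0 : Cardinal.aleph0 ≤ ν) (h : κ ≤ ν) :
    ((2 : Cardinal.{v}) ^ ν) ^ κ ≤ (2 : Cardinal.{v}) ^ ν := by
  rw [← Cardinal.power_mul]
  refine Cardinal.power_le_power_left two_ne_zero ?_
  exact Cardinal.mul_le_of_le h0 le_rfl h

lemma fact_succ {ν : Cardinal.{v}} (h0 : Cardinal.aleph0 ≤ ν) :
    Fact (Order.succ ((2 : Cardinal.{v}) ^ ν)).IsRegular :=
  ⟨Cardinal.isRegular_succ (h0.trans (Cardinal.cantor ν).le)⟩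

lemma raise {A : Type u₁} [Category.{v} A] {C : Type u₂} [Category.{v} C] (F : A ⥤ C)
    (κ : Cardinal.{v}) [Fact κ.IsRegular] [IsCardinalAccessibleCategory A κ]
    [F.IsCardinalAccessible κ] (hC : ∀ X : C, IsPresentable.{v} X) :
    ∃ ν₀ : Cardinal.{v}, κ ≤ ν₀ ∧ ∀ ν ≥ ν₀, ∀ [Fact (Order.succ ((2 : Cardinal.{v}) ^ ν)).IsRegular],
      ∃ Q : ObjectProperty A, ObjectProperty.EssentiallySmall.{v} Q ∧
        Q.IsCardinalFilteredGenerator (Order.succ ((2 : Cardinal.{v}) ^ ν)) ∧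
        ∀ X, Q X → IsCardinalPresentable (F.obj X) (Order.succ ((2 : Cardinal.{v}) ^ ν)) := by
  obtain ⟨𝒜, _, h𝒜⟩ := HasCardinalFilteredGenerator.exists_small_generator A κ
  have hκ : κ.IsRegular := Fact.out
  choose k hk hk' using fun X : C => (hC X).exists_cardinal
  have : Small.{v} (Subtype 𝒜) := inferInstanceAs (ObjectProperty.Small.{v} 𝒜)
  let g : Shrink.{v} (Subtype 𝒜) → Cardinal.{v} := fun a => k (F.obj ((equivShrink _).symm a).1)
  refine ⟨κ ⊔ iSup g, le_sup_left, ?_⟩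
  intro ν hν _
  have hκν : κ ≤ ν := le_sup_left.trans hν
  have h0 : Cardinal.aleph0 ≤ ν := hκ.aleph0_le.trans hκν
  have hlt : ν < (2 : Cardinal.{v}) ^ ν := Cardinal.cantor ν
  have hκμ : κ ≤ (2 : Cardinal.{v}) ^ ν := hκν.trans hlt.le
  have hμ := pow_le_aux h0 hκν
  have hμ0 := h0.trans hlt.le
  generalize (2 : Cardinal.{v}) ^ ν = μ at *
  have hκl : κ ≤ Order.succ μ := hκμ.trans (Order.le_succ μ)
  have hpres : ∀ X, 𝒜 X → IsCardinalPresentable (F.obj X) (Order.succ μ) := by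
    intro X hX
    have := hk' (F.obj X)
    have h1 : k (F.obj X) ≤ iSup g := by
      have := le_ciSup (f := g) Cardinal.bddAbove_of_small (equivShrink _ ⟨X, hX⟩)
      simpa [g] using this
    exact isCardinalPresentable_of_le (κ := k (F.obj X)) _
      (h1.trans ((le_sup_right.trans hν).trans (hlt.le.trans (Order.le_succ _))))
  have h𝒜' : 𝒜 ≤ isCardinalPresentable A (Order.succ μ) :=
    h𝒜.le_isCardinalPresentable.trans (isCardinalPresentable_monotone A hκl)
  refine ⟨fun X => 𝒜.colimitsCardinalClosure (Order.succ μ) X ∧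
    IsCardinalPresentable (F.obj X) (Order.succ μ), ?_, ⟨?_, ?_⟩, fun X hX => hX.2⟩
  · exact ObjectProperty.EssentiallySmall.of_le
      (Q := 𝒜.colimitsCardinalClosure (Order.succ μ)) (fun X hX => hX.1)
  · exact fun X hX => ObjectProperty.colimitsCardinalClosure_le_isCardinalPresentable _ h𝒜' _ hX.1
  · intro X
    obtain ⟨P, _, _, D, t, ⟨hc⟩, hD⟩ := exists_poset_presentation κ h𝒜 X
    have hcol : ∀ U : GoodSet κ μ (fun _ _ _ : P => True), ∃ X ι, IsSub D U.1 X ι := by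
      intro U
      have := U.2.filt
      have := HasCardinalFilteredColimits.hasColimitsOfShape (κ := κ) A U.1
      exact exists_isSub D U.1
    choose Y ι hY using hcol
    have hf := goodSet_filtered (P := P) κ μ hκμ hμ (fun _ _ _ => True) (fun p _ => ⟨p, trivial⟩)
    have := isFiltered_of_isCardinalFiltered (GoodSet κ μ (fun _ _ _ : P => True)) (Order.succ μ)
    obtain ⟨hl⟩ := subC_isColimit hY _ hc
      (goodSet_exists_mem (P := P) κ μ hκμ hμ (fun _ _ _ => True) (fun p _ => ⟨p, trivial⟩))
    refine ⟨GoodSet κ μ (fun _ _ _ : P => True), inferInstance, hf, ⟨⟨⟨subF hY, (subC hY (Cocone.mk X t)).ι, hl⟩, ?_⟩⟩⟩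
    intro U
    have hU := U.2.filt
    have := F.preservesColimitsOfShape_of_isCardinalAccessible κ U.1
    constructor
    · have := ObjectProperty.isClosedUnderColimitsOfShape_colimitsCardinalClosure 𝒜 (Order.succ μ)
        U.1 (hasCardinalLT_arrow_of_set U.1 μ hμ0 U.2.card)
      exact ObjectProperty.prop_of_isColimit _ (hY U).isColimit
        (fun p => ObjectProperty.le_colimitsCardinalClosure _ _ _ (hD _))
    · exact ((hY U).map F).isCardinalPresentable μ hμ0 U.2.card (fun p _ => hpres _ (hD p))

end Raise

section Key

variable {P : Type v} [PartialOrder P] {C : Type u₂} [Category.{v} C]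

lemma map_eq_of_poset (M : P ⥤ C) {p q : P} (a b : p ⟶ q) : M.map a = M.map b :=
  congrArg M.map (Subsingleton.elim a b)

/-- compatibility of chosen lifts -/
def RelNat (M N : P ⥤ C) (q : P → P) (f : ∀ p, M.obj p ⟶ N.obj (q p)) (p p' z : P) : Prop :=
  ∃ (a : q p ⟶ z) (b : q p' ⟶ z), ∀ h : p ⟶ p', f p ≫ N.map a = M.map h ≫ f p' ≫ N.map b

/-- compatibility of the lifts of a map and its inverse -/
def RelInv (M N : P ⥤ C) (q : P → P) (f : ∀ p, M.obj p ⟶ N.obj (q p))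
    (q' : P → P) (g : ∀ p, N.obj p ⟶ M.obj (q' p)) (p p' z : P) : Prop :=
  ∃ (a : q' p' ⟶ z) (b : p ⟶ z), ∀ h : q p ⟶ p', f p ≫ N.map h ≫ g p' ≫ M.map a = M.map b

variable {M N : P ⥤ C} {q : P → P} {f : ∀ p, M.obj p ⟶ N.obj (q p)}
  {q' : P → P} {g : ∀ p, N.obj p ⟶ M.obj (q' p)}

lemma RelNat.mono {p p' z w : P} (h : RelNat M N q f p p' z) (t : z ⟶ w) :
    RelNat M N q f p p' w := by
  obtain ⟨a, b, hab⟩ := h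
  refine ⟨a ≫ t, b ≫ t, fun h => ?_⟩
  have := hab h =≫ N.map t
  simpa only [Functor.map_comp, Category.assoc] using this

lemma RelInv.mono {p p' z w : P} (h : RelInv M N q f q' g p p' z) (t : z ⟶ w) :
    RelInv M N q f q' g p p' w := by
  obtain ⟨a, b, hab⟩ := h
  refine ⟨a ≫ t, b ≫ t, fun h => ?_⟩
  have := hab h =≫ M.map t
  simpa only [Functor.map_comp, Category.assoc] using this

section

variable (κ : Cardinal.{v}) [Fact κ.IsRegular] [IsCardinalFiltered P κ]
  {cM : Cocone M} {cN : Cocone N}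

lemma relNat_exists (hcN : IsColimit cN)
    (hM : ∀ p, IsCardinalPresentable (M.obj p) κ) (φ : cM.pt ⟶ cN.pt)
    (hf : ∀ p, f p ≫ cN.ι.app (q p) = cM.ι.app p ≫ φ) (p p' : P) :
    ∃ z, RelNat M N q f p p' z := by
  have := isFiltered_of_isCardinalFiltered P κ
  by_cases hpp : Nonempty (p ⟶ p')
  · obtain ⟨h⟩ := hpp
    have := hM p
    have e : f p ≫ cN.ι.app (q p) = (M.map h ≫ f p') ≫ cN.ι.app (q p') := by
      rw [Category.assoc, hf, hf, ← Category.assoc, cM.w]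
    obtain ⟨z, a, b, hab⟩ := IsCardinalPresentable.exists_eq_of_isColimit κ hcN _ _ e
    refine ⟨z, a, b, fun h' => ?_⟩
    rw [hab, Category.assoc, map_eq_of_poset M h h']
  · exact ⟨IsFiltered.max (q p) (q p'), IsFiltered.leftToMax _ _, IsFiltered.rightToMax _ _,
      fun h => absurd ⟨h⟩ hpp⟩

lemma relInv_exists (hcM : IsColimit cM)
    (hM : ∀ p, IsCardinalPresentable (M.obj p) κ) (φ : cM.pt ⟶ cN.pt) (φ' : cN.pt ⟶ cM.pt)
    (hφ : φ ≫ φ' = 𝟙 _)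
    (hf : ∀ p, f p ≫ cN.ι.app (q p) = cM.ι.app p ≫ φ)
    (hg : ∀ p, g p ≫ cM.ι.app (q' p) = cN.ι.app p ≫ φ') (p p' : P) :
    ∃ z, RelInv M N q f q' g p p' z := by
  have := isFiltered_of_isCardinalFiltered P κ
  by_cases hpp : Nonempty (q p ⟶ p')
  · obtain ⟨h⟩ := hpp
    have := hM p
    have e : (f p ≫ N.map h ≫ g p') ≫ cM.ι.app (q' p') = 𝟙 _ ≫ cM.ι.app p := by
      rw [Category.assoc, Category.assoc, hg, ← Category.assoc (N.map h), cN.w, ← Category.assoc,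
        hf, Category.assoc, hφ, Category.id_comp]
      exact Category.comp_id _
    obtain ⟨z, a, b, hab⟩ := IsCardinalPresentable.exists_eq_of_isColimit κ hcM _ _ e
    refine ⟨z, a, b, fun h' => ?_⟩
    rw [Category.id_comp] at hab
    rw [← hab, Category.assoc, Category.assoc, map_eq_of_poset N h h']
  · exact ⟨IsFiltered.max (q' p') p, IsFiltered.leftToMax _ _, IsFiltered.rightToMax _ _,
      fun h => absurd ⟨h⟩ hpp⟩

end

section

variable {U : Set P} {X Y : C} {ι : ∀ p, p ∈ U → (M.obj p ⟶ X)} {ι' : ∀ p, p ∈ U → (N.obj p ⟶ Y)}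

/-- the specification of the induced map -/
def IsInduced (q : P → P) (f : ∀ p, M.obj p ⟶ N.obj (q p))
    (ι : ∀ p, p ∈ U → (M.obj p ⟶ X)) (ι' : ∀ p, p ∈ U → (N.obj p ⟶ Y)) (ψ : X ⟶ Y) : Prop :=
  ∀ p (hp : p ∈ U) z (hz : z ∈ U) (a : q p ⟶ z), ι p hp ≫ ψ = f p ≫ N.map a ≫ ι' z hz

lemma exists_isInduced (hX : IsSub M U X ι) (hY : IsSub N U Y ι')
    (hU : ∀ p ∈ U, ∀ p' ∈ U, ∃ w ∈ U, p ≤ w ∧ p' ≤ w)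
    (hR : ∀ p ∈ U, ∀ p' ∈ U, ∃ z ∈ U, RelNat M N q f p p' z) :
    ∃ ψ, IsInduced q f ι ι' ψ := by
  have h1 : ∀ p : U, ∃ z : U, Nonempty (q p.1 ⟶ z.1) := by
    rintro ⟨p, hp⟩
    obtain ⟨z, hz, a, _, _⟩ := hR p hp p hp
    exact ⟨⟨z, hz⟩, ⟨a⟩⟩
  choose z a using h1
  have indep : ∀ (p w w' : P) (hw : w ∈ U) (hw' : w' ∈ U) (b : q p ⟶ w) (b' : q p ⟶ w'),
      f p ≫ N.map b ≫ ι' w hw = f p ≫ N.map b' ≫ ι' w' hw' := by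
    intro p w w' hw hw' b b'
    obtain ⟨y, hy, h1, h2⟩ := hU w hw w' hw'
    rw [← hY.w w y hw hy (homOfLE h1), ← hY.w w' y hw' hy (homOfLE h2), ← Category.assoc (N.map b),
      ← Category.assoc (N.map b'), ← N.map_comp, ← N.map_comp,
      map_eq_of_poset N (b ≫ homOfLE h1) (b' ≫ homOfLE h2)]
  obtain ⟨ψ, hψ⟩ := hX.desc (fun p hp => f p ≫ N.map (a ⟨p, hp⟩).some ≫ ι' _ (z ⟨p, hp⟩).2) (by
    intro p p' hp hp' h
    obtain ⟨w, hw, b, b', hb⟩ := hR p hp p' hp'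
    rw [indep p _ w _ hw _ b, indep p' _ w _ hw _ b', ← Category.assoc (f p), hb h]
    simp only [Category.assoc])
  refine ⟨ψ, fun p hp w hw b => ?_⟩
  rw [hψ]
  exact indep p _ _ _ _ _ _

lemma IsInduced.comp_eq_id {ψ : X ⟶ Y} {θ : Y ⟶ X} (hX : IsSub M U X ι)
    (hψ : IsInduced q f ι ι' ψ) (hθ : IsInduced q' g ι' ι θ)
    (hR : ∀ p ∈ U, ∀ p' ∈ U, ∃ z ∈ U, RelNat M N q f p p' z)
    (hI : ∀ p ∈ U, ∀ p' ∈ U, ∃ z ∈ U, RelInv M N q f q' g p p' z) : ψ ≫ θ = 𝟙 X := by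
  apply hX.ext
  intro p hp
  obtain ⟨z, hz, a, _, _⟩ := hR p hp p hp
  obtain ⟨w, hw, b, c, hbc⟩ := hI p hp z hz
  rw [← Category.assoc, hψ p hp z hz a, Category.assoc, Category.assoc, hθ z hz w hw b,
    Category.comp_id, ← hX.w p w hp hw c, ← hbc a]
  simp only [Category.assoc]

lemma IsInduced.comp_eq {ψ : X ⟶ Y} (hX : IsSub M U X ι) (hψ : IsInduced q f ι ι' ψ)
    (hR : ∀ p ∈ U, ∀ p' ∈ U, ∃ z ∈ U, RelNat M N q f p p' z)
    {Z : C} (k : Y ⟶ Z) (l : X ⟶ Z)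
    (hk : ∀ p (hp : p ∈ U) z (hz : z ∈ U) (a : q p ⟶ z),
      ι p hp ≫ l = f p ≫ N.map a ≫ ι' z hz ≫ k) : ψ ≫ k = l := by
  apply hX.ext
  intro p hp
  obtain ⟨z, hz, a, _, _⟩ := hR p hp p hp
  rw [hk p hp z hz a, ← Category.assoc, hψ p hp z hz a, Category.assoc, Category.assoc]

end

end Key

section CommaSec

variable {A : Type u₁} [Category.{v} A] {B : Type u₃} [Category.{v} B] {C : Type u₂} [Category.{v} C]
  (F : A ⥤ C) (G : B ⥤ C)

/-- the objects of the comma category given by isomorphisms -/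
def isoP : ObjectProperty (Comma F G) := fun X => IsIso X.hom

lemma isoP_closed (J : Type v) [SmallCategory J] [HasColimitsOfShape J A] [HasColimitsOfShape J B]
    [PreservesColimitsOfShape J F] [PreservesColimitsOfShape J G] :
    (isoP F G).IsClosedUnderColimitsOfShape J where
  colimitsOfShape_le := by
    rintro X ⟨p⟩
    have h1 : IsColimit ((Comma.fst F G ⋙ F).mapCocone (Cocone.mk X p.ι)) :=
      isColimitOfPreserves (Comma.fst F G ⋙ F) p.isColimit
    have h2 : IsColimit ((Comma.snd F G ⋙ G).mapCocone (Cocone.mk X p.ι)) :=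
      isColimitOfPreserves (Comma.snd F G ⋙ G) p.isColimit
    let α : p.diag ⋙ Comma.fst F G ⋙ F ≅ p.diag ⋙ Comma.snd F G ⋙ G :=
      NatIso.ofComponents (fun j => @asIso _ _ _ _ (p.diag.obj j).hom (p.prop_diag_obj j))
        (fun f => (p.diag.map f).w)
    have e : X.hom = (h1.coconePointsIsoOfNatIso h2 α).hom := by
      apply h1.hom_ext
      intro j
      rw [IsColimit.comp_coconePointsIsoOfNatIso_hom]
      exact (p.ι.app j).w
    change IsIso X.hom
    rw [e]
    infer_instance

lemma comma_presentable (κ : Cardinal.{v}) [Fact κ.IsRegular]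
    [HasCardinalFilteredColimits.{v} A κ] [HasCardinalFilteredColimits.{v} B κ]
    [F.IsCardinalAccessible κ] [G.IsCardinalAccessible κ] (e : Comma F G)
    [IsCardinalPresentable e.left κ] [IsCardinalPresentable e.right κ]
    [IsCardinalPresentable (F.obj e.left) κ] : IsCardinalPresentable e κ where
  preservesColimitOfShape J _ _ := by
    have := isFiltered_of_isCardinalFiltered J κ
    have := HasCardinalFilteredColimits.hasColimitsOfShape (κ := κ) A J
    have := HasCardinalFilteredColimits.hasColimitsOfShape (κ := κ) B J
    have := F.preservesColimitsOfShape_of_isCardinalAccessible κ J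
    have := G.preservesColimitsOfShape_of_isCardinalAccessible κ J
    refine ⟨fun {D} => ⟨fun {c} hc => ⟨?_⟩⟩⟩
    have h1 := isColimitOfPreserves (Comma.fst F G) hc
    have h2 := isColimitOfPreserves (Comma.snd F G) hc
    have h3 := isColimitOfPreserves (Comma.snd F G ⋙ G) hc
    refine Types.FilteredColimit.isColimitOf' _ _ ?_ ?_
    · intro m
      change e ⟶ c.pt at m
      obtain ⟨i, l, hl⟩ := IsCardinalPresentable.exists_hom_of_isColimit κ h1 m.left
      obtain ⟨j, r, hr⟩ := IsCardinalPresentable.exists_hom_of_isColimit κ h2 m.right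
      change e.left ⟶ (D.obj i).left at l
      change e.right ⟶ (D.obj j).right at r
      change l ≫ (c.ι.app i).left = m.left at hl
      change r ≫ (c.ι.app j).right = m.right at hr
      have e1 : (F.map l ≫ (D.obj i).hom) ≫ G.map (c.ι.app i).right =
          (e.hom ≫ G.map r) ≫ G.map (c.ι.app j).right := by
        have w1 := (c.ι.app i).w
        have w2 := m.w
        change F.map (c.ι.app i).left ≫ c.pt.hom = (D.obj i).hom ≫ G.map (c.ι.app i).right at w1
        rw [Category.assoc, ← w1, ← Category.assoc, ← F.map_comp, hl, w2, Category.assoc,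
          ← G.map_comp, hr]
      obtain ⟨k, a, b, hab⟩ := IsCardinalPresentable.exists_eq_of_isColimit κ h3 (i₁ := i) (i₂ := j)
        (F.map l ≫ (D.obj i).hom) (e.hom ≫ G.map r) e1
      change (F.map l ≫ (D.obj i).hom) ≫ G.map (D.map a).right =
        (e.hom ≫ G.map r) ≫ G.map (D.map b).right at hab
      refine ⟨k, ⟨l ≫ (D.map a).left, r ≫ (D.map b).right, ?_⟩, ?_⟩
      · rw [F.map_comp, G.map_comp, Category.assoc, (D.map a).w, ← Category.assoc, hab,
          Category.assoc]
      · have c1 := congrArg CommaMorphism.left (c.w a)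
        have c2 := congrArg CommaMorphism.right (c.w b)
        change (D.map a).left ≫ (c.ι.app k).left = (c.ι.app i).left at c1
        change (D.map b).right ≫ (c.ι.app k).right = (c.ι.app j).right at c2
        apply CommaMorphism.ext
        · change m.left = (l ≫ (D.map a).left) ≫ (c.ι.app k).left
          rw [Category.assoc, c1, hl]
        · change m.right = (r ≫ (D.map b).right) ≫ (c.ι.app k).right
          rw [Category.assoc, c2, hr]
    · intro i f g hfg
      change e ⟶ D.obj i at f
      change e ⟶ D.obj i at g
      change f ≫ c.ι.app i = g ≫ c.ι.app i at hfg
      obtain ⟨j, a, ha⟩ := IsCardinalPresentable.exists_eq_of_isColimit' κ h1 (i := i) f.left g.left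
        (congrArg CommaMorphism.left hfg)
      obtain ⟨k, b, hb⟩ := IsCardinalPresentable.exists_eq_of_isColimit' κ h2 (i := i) f.right g.right
        (congrArg CommaMorphism.right hfg)
      change f.left ≫ (D.map a).left = g.left ≫ (D.map a).left at ha
      change f.right ≫ (D.map b).right = g.right ≫ (D.map b).right at hb
      obtain ⟨z, a', b', hz⟩ := IsFiltered.span a b
      refine ⟨z, a ≫ a', ?_⟩
      change f ≫ D.map (a ≫ a') = g ≫ D.map (a ≫ a')
      apply CommaMorphism.ext
      · rw [D.map_comp]
        change f.left ≫ (D.map a).left ≫ (D.map a').left = g.left ≫ (D.map a).left ≫ (D.map a').left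
        rw [← Category.assoc, ha, Category.assoc]
      · rw [hz, D.map_comp]
        change f.right ≫ (D.map b).right ≫ (D.map b').right =
          g.right ≫ (D.map b).right ≫ (D.map b').right
        rw [← Category.assoc, hb, Category.assoc]

/-- the pseudopullback -/
abbrev IsoComma := (isoP F G).FullSubcategory

lemma isoComma_hasColimits (J : Type v) [SmallCategory J] [HasColimitsOfShape J A]
    [HasColimitsOfShape J B]
    [PreservesColimitsOfShape J F] [PreservesColimitsOfShape J G] :
    HasColimitsOfShape J (IsoComma F G) ∧ PreservesColimitsOfShape J (isoP F G).ι := by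
  have := isoP_closed F G J
  exact ⟨inferInstance, inferInstance⟩

lemma isoComma_presentable (κ : Cardinal.{v}) [Fact κ.IsRegular]
    [HasCardinalFilteredColimits.{v} A κ] [HasCardinalFilteredColimits.{v} B κ]
    [F.IsCardinalAccessible κ] [G.IsCardinalAccessible κ] (e : IsoComma F G)
    (h1 : IsCardinalPresentable e.obj.left κ) (h2 : IsCardinalPresentable e.obj.right κ)
    (h3 : IsCardinalPresentable (F.obj e.obj.left) κ) : IsCardinalPresentable e κ where
  preservesColimitOfShape J _ _ := by
    have := HasCardinalFilteredColimits.hasColimitsOfShape (κ := κ) A J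
    have := HasCardinalFilteredColimits.hasColimitsOfShape (κ := κ) B J
    have := F.preservesColimitsOfShape_of_isCardinalAccessible κ J
    have := G.preservesColimitsOfShape_of_isCardinalAccessible κ J
    have := comma_presentable F G κ e.obj
    have := (isoComma_hasColimits F G J).2
    have := preservesColimitsOfShape_of_isCardinalPresentable e.obj κ J
    have α : (isoP F G).ι ⋙ coyoneda.obj (op e.obj) ≅ coyoneda.obj (op e) :=
      NatIso.ofComponents (fun X => Equiv.toIso
        { toFun := fun f => ObjectProperty.homMk f
          invFun := fun f => f.hom
          left_inv := fun _ => rfl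
          right_inv := fun _ => rfl }) (fun f => rfl)
    exact preservesColimitsOfShape_of_natIso α

end CommaSec

section KeyLemma

variable {A : Type u₁} [Category.{v} A] {B : Type u₃} [Category.{v} B] {C : Type u₂} [Category.{v} C]
  (F : A ⥤ C) (G : B ⥤ C)

lemma key_poset {P : Type v} [PartialOrder P] (κ : Cardinal.{v}) [Fact κ.IsRegular]
    [IsCardinalFiltered P κ]
    [HasCardinalFilteredColimits.{v} A κ] [HasCardinalFilteredColimits.{v} B κ]
    [F.IsCardinalAccessible κ] [G.IsCardinalAccessible κ]
    (μ : Cardinal.{v}) (hκμ : κ ≤ μ) (hμ : μ ^ κ ≤ μ) [Fact (Order.succ μ).IsRegular]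
    (D₁ : P ⥤ A) (D₂ : P ⥤ B) (c₁ : Cocone D₁) (c₂ : Cocone D₂)
    (hc₁ : IsColimit c₁) (hc₂ : IsColimit c₂)
    (φ : F.obj c₁.pt ⟶ G.obj c₂.pt) (hφ : IsIso φ)
    (hD₁ : ∀ p, IsCardinalPresentable (D₁.obj p) κ)
    (hD₂ : ∀ p, IsCardinalPresentable (D₂.obj p) κ)
    (hFD₁ : ∀ p, IsCardinalPresentable (F.obj (D₁.obj p)) κ)
    (hGD₂ : ∀ p, IsCardinalPresentable (G.obj (D₂.obj p)) κ) :
    ∃ (J : Type v) (_ : PartialOrder J) (_ : IsCardinalFiltered J (Order.succ μ))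
      (T : J ⥤ IsoComma F G)
      (t : T ⟶ (Functor.const J).obj (⟨⟨c₁.pt, c₂.pt, φ⟩, hφ⟩ : IsoComma F G)),
      Nonempty (IsColimit (Cocone.mk _ t)) ∧ ∀ j,
        IsCardinalPresentable (T.obj j).obj.left (Order.succ μ) ∧
        IsCardinalPresentable (T.obj j).obj.right (Order.succ μ) ∧
        IsCardinalPresentable (F.obj (T.obj j).obj.left) (Order.succ μ) := by
  have := isFiltered_of_isCardinalFiltered P κ
  have hκ : κ.IsRegular := Fact.out
  have hμ0 : Cardinal.aleph0 ≤ μ := hκ.aleph0_le.trans hκμ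
  have := F.preservesColimitsOfShape_of_isCardinalAccessible κ P
  have := G.preservesColimitsOfShape_of_isCardinalAccessible κ P
  let M := D₁ ⋙ F
  let N := D₂ ⋙ G
  let cM : Cocone M := F.mapCocone c₁
  let cN : Cocone N := G.mapCocone c₂
  have hcM : IsColimit cM := isColimitOfPreserves F hc₁
  have hcN : IsColimit cN := isColimitOfPreserves G hc₂
  let φ' : cN.pt ⟶ cM.pt := inv φ
  have e1 : φ ≫ φ' = 𝟙 _ := IsIso.hom_inv_id φ
  have e2 : φ' ≫ φ = 𝟙 _ := IsIso.inv_hom_id φ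
  have hM : ∀ p, IsCardinalPresentable (M.obj p) κ := hFD₁
  have hN : ∀ p, IsCardinalPresentable (N.obj p) κ := hGD₂
  have ex1 : ∀ p, ∃ q, ∃ f : M.obj p ⟶ N.obj q, f ≫ cN.ι.app q = cM.ι.app p ≫ φ := fun p =>
    IsCardinalPresentable.exists_hom_of_isColimit κ hcN (cM.ι.app p ≫ φ)
  have ex2 : ∀ p, ∃ q, ∃ f : N.obj p ⟶ M.obj q, f ≫ cM.ι.app q = cN.ι.app p ≫ φ' := fun p =>
    IsCardinalPresentable.exists_hom_of_isColimit κ hcM (cN.ι.app p ≫ φ')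
  choose q f hf using ex1
  choose q' g hg using ex2
  let R : P → P → P → Prop := fun p p' z => (p ≤ z ∧ p' ≤ z) ∧ RelNat M N q f p p' z ∧
    RelNat N M q' g p p' z ∧ RelInv M N q f q' g p p' z ∧ RelInv N M q' g q f p p' z
  have hR : ∀ p p', ∃ z, R p p' z := by
    intro p p'
    obtain ⟨z1, h1⟩ := relNat_exists (cM := cM) κ hcN hM φ hf p p'
    obtain ⟨z2, h2⟩ := relNat_exists (cM := cN) κ hcM hN φ' hg p p'
    obtain ⟨z3, h3⟩ := relInv_exists (cN := cN) κ hcM hM φ φ' e1 hf hg p p'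
    obtain ⟨z4, h4⟩ := relInv_exists (cM := cN) (cN := cM) κ hcN hN φ' φ e2 hg hf p p'
    obtain ⟨w1, a1, a2, _⟩ := IsFilteredOrEmpty.cocone_objs z1 z2
    obtain ⟨w2, a3, a4, _⟩ := IsFilteredOrEmpty.cocone_objs z3 z4
    obtain ⟨w3, a5, a6, _⟩ := IsFilteredOrEmpty.cocone_objs p p'
    obtain ⟨w4, b1, b2, _⟩ := IsFilteredOrEmpty.cocone_objs w1 w2
    obtain ⟨w, d1, d2, _⟩ := IsFilteredOrEmpty.cocone_objs w3 w4
    exact ⟨w, ⟨leOfHom (a5 ≫ d1), leOfHom (a6 ≫ d1)⟩, h1.mono (a1 ≫ b1 ≫ d2),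
      h2.mono (a2 ≫ b1 ≫ d2), h3.mono (a3 ≫ b2 ≫ d2), h4.mono (a4 ≫ b2 ≫ d2)⟩
  have filt := goodSet_filtered κ μ hκμ hμ R hR
  have hcov := goodSet_exists_mem κ μ hκμ hμ R hR
  have := isFiltered_of_isCardinalFiltered (GoodSet κ μ R) (Order.succ μ)
  -- subcolimits
  have sA : ∀ U : GoodSet κ μ R, ∃ X ι, IsSub D₁ U.1 X ι := fun U => by
    have := U.2.filt
    have := HasCardinalFilteredColimits.hasColimitsOfShape (κ := κ) A U.1
    exact exists_isSub D₁ U.1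
  have sB : ∀ U : GoodSet κ μ R, ∃ X ι, IsSub D₂ U.1 X ι := fun U => by
    have := U.2.filt
    have := HasCardinalFilteredColimits.hasColimitsOfShape (κ := κ) B U.1
    exact exists_isSub D₂ U.1
  choose X ι hX using sA
  choose Y ι' hY using sB
  have hFX : ∀ U : GoodSet κ μ R, IsSub M U.1 (F.obj (X U)) (fun p hp => F.map (ι U p hp)) :=
    fun U => by
      have := U.2.filt
      have := F.preservesColimitsOfShape_of_isCardinalAccessible κ U.1
      exact (hX U).map F
  have hGY : ∀ U : GoodSet κ μ R, IsSub N U.1 (G.obj (Y U)) (fun p hp => G.map (ι' U p hp)) :=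
    fun U => by
      have := U.2.filt
      have := G.preservesColimitsOfShape_of_isCardinalAccessible κ U.1
      exact (hY U).map G
  have hdir : ∀ U : GoodSet κ μ R, ∀ p ∈ U.1, ∀ p' ∈ U.1, ∃ w ∈ U.1, p ≤ w ∧ p' ≤ w :=
    fun U p hp p' hp' => by
      obtain ⟨z, hz, h⟩ := U.2.closed p hp p' hp'
      exact ⟨z, hz, h.1⟩
  have hR1 : ∀ U : GoodSet κ μ R, ∀ p ∈ U.1, ∀ p' ∈ U.1, ∃ z ∈ U.1, RelNat M N q f p p' z :=
    fun U p hp p' hp' => by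
      obtain ⟨z, hz, h⟩ := U.2.closed p hp p' hp'
      exact ⟨z, hz, h.2.1⟩
  have hR2 : ∀ U : GoodSet κ μ R, ∀ p ∈ U.1, ∀ p' ∈ U.1, ∃ z ∈ U.1, RelNat N M q' g p p' z :=
    fun U p hp p' hp' => by
      obtain ⟨z, hz, h⟩ := U.2.closed p hp p' hp'
      exact ⟨z, hz, h.2.2.1⟩
  have hI1 : ∀ U : GoodSet κ μ R, ∀ p ∈ U.1, ∀ p' ∈ U.1, ∃ z ∈ U.1,
      RelInv M N q f q' g p p' z :=
    fun U p hp p' hp' => by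
      obtain ⟨z, hz, h⟩ := U.2.closed p hp p' hp'
      exact ⟨z, hz, h.2.2.2.1⟩
  have hI2 : ∀ U : GoodSet κ μ R, ∀ p ∈ U.1, ∀ p' ∈ U.1, ∃ z ∈ U.1,
      RelInv N M q' g q f p p' z :=
    fun U p hp p' hp' => by
      obtain ⟨z, hz, h⟩ := U.2.closed p hp p' hp'
      exact ⟨z, hz, h.2.2.2.2⟩
  have exψ := fun U => exists_isInduced (hFX U) (hGY U) (hdir U) (hR1 U)
  have exθ := fun U => exists_isInduced (hGY U) (hFX U) (hdir U) (hR2 U)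
  choose ψ hψ using exψ
  choose θ hθ using exθ
  have hψiso : ∀ U, IsIso (ψ U) := fun U =>
    ⟨θ U, IsInduced.comp_eq_id (hFX U) (hψ U) (hθ U) (hR1 U) (hI1 U),
      IsInduced.comp_eq_id (hGY U) (hθ U) (hψ U) (hR2 U) (hI2 U)⟩
  have sq1 : ∀ (U V : GoodSet κ μ R) (hUV : U.1 ⊆ V.1),
      ψ U ≫ G.map (subMap hY hUV) = F.map (subMap hX hUV) ≫ ψ V := by
    intro U V hUV
    refine IsInduced.comp_eq (hFX U) (hψ U) (hR1 U) _ _ ?_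
    intro p hp z hz a
    have h1 : F.map (ι U p hp) ≫ F.map (subMap hX hUV) = F.map (ι V p (hUV hp)) := by
      rw [← F.map_comp, ι_subMap]
    have h2 : G.map (ι' U z hz) ≫ G.map (subMap hY hUV) = G.map (ι' V z (hUV hz)) := by
      rw [← G.map_comp, ι_subMap]
    rw [h2, ← Category.assoc, h1]
    exact hψ V p (hUV hp) z (hUV hz) a
  have sq2 : ∀ (U : GoodSet κ μ R),
      ψ U ≫ G.map (subTo hY c₂ U) = F.map (subTo hX c₁ U) ≫ φ := by
    intro U
    refine IsInduced.comp_eq (hFX U) (hψ U) (hR1 U) _ _ ?_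
    intro p hp z hz a
    have h1 : F.map (ι U p hp) ≫ F.map (subTo hX c₁ U) = cM.ι.app p := by
      rw [← F.map_comp, ι_subTo]; rfl
    have h2 : G.map (ι' U z hz) ≫ G.map (subTo hY c₂ U) = cN.ι.app z := by
      rw [← G.map_comp, ι_subTo]; rfl
    rw [h2, ← Category.assoc, h1, cN.w a]
    exact (hf p).symm
  let T : GoodSet κ μ R ⥤ IsoComma F G :=
    { obj := fun U => ⟨⟨X U, Y U, ψ U⟩, hψiso U⟩
      map := fun {U V} k => ObjectProperty.homMk
        ⟨(subF hX).map k, (subF hY).map k, (sq1 U V (leOfHom k)).symm⟩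
      map_id := fun U => ObjectProperty.hom_ext _
        (CommaMorphism.ext ((subF hX).map_id U) ((subF hY).map_id U))
      map_comp := fun k l => ObjectProperty.hom_ext _
        (CommaMorphism.ext ((subF hX).map_comp k l) ((subF hY).map_comp k l)) }
  let t : T ⟶ (Functor.const _).obj (⟨⟨c₁.pt, c₂.pt, φ⟩, hφ⟩ : IsoComma F G) :=
    { app := fun U => ObjectProperty.homMk
        ⟨subTo hX c₁ U, subTo hY c₂ U, (sq2 U).symm⟩
      naturality := fun U V k => ObjectProperty.hom_ext _
        (CommaMorphism.ext ((subC hX c₁).ι.naturality k) ((subC hY c₂).ι.naturality k)) }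
  have k1 := (subC_isColimit hX c₁ hc₁ hcov).some
  have k2 := (subC_isColimit hY c₂ hc₂ hcov).some
  have hlam : κ ≤ Order.succ μ := hκμ.trans (Order.le_succ μ)
  have := IsCardinalFiltered.of_le (GoodSet κ μ R) hlam
  have := F.preservesColimitsOfShape_of_isCardinalAccessible κ (GoodSet κ μ R)
  refine ⟨GoodSet κ μ R, inferInstance, filt, T, t, ?_, fun U => ⟨?_, ?_, ?_⟩⟩
  · have k3 : IsColimit ((isoP F G).ι.mapCocone (Cocone.mk _ t)) := by
      apply Comma.fstSndJointlyReflectColimit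
      · exact k1
      · exact k2
    exact ⟨isColimitOfReflects (isoP F G).ι k3⟩
  · exact (hX U).isCardinalPresentable μ hμ0 U.2.card
      (fun p _ => have := hD₁ p; isCardinalPresentable_of_le _ hlam)
  · exact (hY U).isCardinalPresentable μ hμ0 U.2.card
      (fun p _ => have := hD₂ p; isCardinalPresentable_of_le _ hlam)
  · exact (hFX U).isCardinalPresentable μ hμ0 U.2.card
      (fun p _ => have := hFD₁ p; isCardinalPresentable_of_le _ hlam)

end KeyLemma

section Access

variable {A : Type u₁} [Category.{v} A] {B : Type u₃} [Category.{v} B] {C : Type u₂} [Category.{v} C]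
  (F : A ⥤ C) (G : B ⥤ C)

lemma prod_filtered (I J : Type v) [PartialOrder I] [PartialOrder J] (κ : Cardinal.{v})
    [Fact κ.IsRegular] [IsCardinalFiltered I κ] [IsCardinalFiltered J κ] :
    @IsCardinalFiltered (I × J) (Preorder.smallCategory _) κ _ := by
  apply isCardinalFiltered_preorder
  intro K s hK
  have hK' := (hasCardinalLT_iff_cardinal_mk_lt K κ).2 hK
  exact ⟨(IsCardinalFiltered.max (fun k => (s k).1) hK',
    IsCardinalFiltered.max (fun k => (s k).2) hK'), fun k =>
    ⟨leOfHom (IsCardinalFiltered.toMax (fun k => (s k).1) hK' k),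
      leOfHom (IsCardinalFiltered.toMax (fun k => (s k).2) hK' k)⟩⟩

lemma key_obj (κ : Cardinal.{v}) [Fact κ.IsRegular]
    [HasCardinalFilteredColimits.{v} A κ] [HasCardinalFilteredColimits.{v} B κ]
    [F.IsCardinalAccessible κ] [G.IsCardinalAccessible κ]
    (μ : Cardinal.{v}) (hκμ : κ ≤ μ) (hμ : μ ^ κ ≤ μ) [Fact (Order.succ μ).IsRegular]
    {QA : ObjectProperty A} {QB : ObjectProperty B} (hA : QA.IsCardinalFilteredGenerator κ)
    (hB : QB.IsCardinalFilteredGenerator κ)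
    (hFA : ∀ X, QA X → IsCardinalPresentable (F.obj X) κ)
    (hGB : ∀ X, QB X → IsCardinalPresentable (G.obj X) κ) (e : IsoComma F G) :
    ∃ (J : Type v) (_ : PartialOrder J) (_ : IsCardinalFiltered J (Order.succ μ))
      (T : J ⥤ IsoComma F G)
      (t : T ⟶ (Functor.const J).obj e),
      Nonempty (IsColimit (Cocone.mk _ t)) ∧ ∀ j,
        IsCardinalPresentable (T.obj j).obj.left (Order.succ μ) ∧
        IsCardinalPresentable (T.obj j).obj.right (Order.succ μ) ∧
        IsCardinalPresentable (F.obj (T.obj j).obj.left) (Order.succ μ) := by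
  obtain ⟨⟨X, Y, φ⟩, hφ⟩ := e
  obtain ⟨I, _, _, D₁, t₁, ⟨h₁⟩, q₁⟩ := exists_poset_presentation κ hA X
  obtain ⟨J, _, _, D₂, t₂, ⟨h₂⟩, q₂⟩ := exists_poset_presentation κ hB Y
  let : Category (I × J) := Preorder.smallCategory _
  have := prod_filtered I J κ
  have := isFiltered_of_isCardinalFiltered (I × J) κ
  have neI : Nonempty I := IsCardinalFiltered.nonempty I κ
  have neJ : Nonempty J := IsCardinalFiltered.nonempty J κ
  let p₁ : (I × J) ⥤ I := Monotone.functor (f := (Prod.fst : I × J → I)) monotone_fst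
  let p₂ : (I × J) ⥤ J := Monotone.functor (f := (Prod.snd : I × J → J)) monotone_snd
  have f₁ : p₁.Final := Functor.final_of_exists_of_isFiltered p₁
    (fun d => ⟨(d, neJ.some), ⟨𝟙 d⟩⟩) (fun {_ c} _ _ => ⟨c, homOfLE le_rfl, Subsingleton.elim _ _⟩)
  have f₂ : p₂.Final := Functor.final_of_exists_of_isFiltered p₂
    (fun d => ⟨(neI.some, d), ⟨𝟙 d⟩⟩) (fun {_ c} _ _ => ⟨c, homOfLE le_rfl, Subsingleton.elim _ _⟩)
  exact key_poset F G κ μ hκμ hμ (p₁ ⋙ D₁) (p₂ ⋙ D₂) (Cocone.whisker p₁ (Cocone.mk X t₁))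
    (Cocone.whisker p₂ (Cocone.mk Y t₂))
    ((Functor.Final.isColimitWhiskerEquiv p₁ _).symm h₁)
    ((Functor.Final.isColimitWhiskerEquiv p₂ _).symm h₂) φ hφ
    (fun p => hA.le_isCardinalPresentable _ (q₁ _))
    (fun p => hB.le_isCardinalPresentable _ (q₂ _))
    (fun p => hFA _ (q₁ _)) (fun p => hGB _ (q₂ _))

lemma hasCardinalFilteredColimits_of_le' {κ κ' : Cardinal.{v}} [Fact κ.IsRegular] [Fact κ'.IsRegular]
    [HasCardinalFilteredColimits.{v} A κ] (h : κ ≤ κ') : HasCardinalFilteredColimits.{v} A κ' where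
  hasColimitsOfShape J _ _ := by
    have := IsCardinalFiltered.of_le J h
    exact HasCardinalFilteredColimits.hasColimitsOfShape (κ := κ) A J

/-- property of being componentwise presentable -/
def presP (κ : Cardinal.{v}) [Fact κ.IsRegular] : ObjectProperty (IsoComma F G) := fun e =>
  IsCardinalPresentable e.obj.left κ ∧ IsCardinalPresentable e.obj.right κ ∧
    IsCardinalPresentable (F.obj e.obj.left) κ

lemma presP_small (κ : Cardinal.{v}) [Fact κ.IsRegular]
    [HasCardinalFilteredGenerator A κ] [HasCardinalFilteredGenerator B κ] :
    ObjectProperty.EssentiallySmall.{v} (presP F G κ) := by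
  let S := ObjectProperty.comma F G (isCardinalPresentable A κ) (isCardinalPresentable B κ)
  have : ObjectProperty.EssentiallySmall.{v} (S ⊓ isoP F G) :=
    ObjectProperty.EssentiallySmall.of_le (Q := S) (fun X h => h.1)
  obtain ⟨R, _, hR, hR'⟩ := ObjectProperty.EssentiallySmall.exists_small_le.{v} (S ⊓ isoP F G)
  refine ⟨⟨fun e => R e.obj, ?_, ?_⟩⟩
  · exact small_of_injective (β := Subtype R) (f := fun e => ⟨e.1.obj, e.2⟩) (by
      rintro ⟨⟨a, ha⟩, ha'⟩ ⟨⟨b, hb⟩, hb'⟩ h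
      have h' : a = b := congrArg Subtype.val h
      subst h'
      rfl)
  · intro e he
    obtain ⟨Y, hY, ⟨i⟩⟩ := hR' e.obj ⟨⟨he.1, he.2.1⟩, e.property⟩
    exact ⟨⟨Y, (hR Y hY).2⟩, hY, ⟨(isoP F G).ι.preimageIso i⟩⟩

theorem isoComma_accessible (κ₁ κ₂ : Cardinal.{v}) [Fact κ₁.IsRegular] [Fact κ₂.IsRegular]
    [IsCardinalAccessibleCategory A κ₁] [IsCardinalAccessibleCategory B κ₂]
    [F.IsCardinalAccessible κ₁] [G.IsCardinalAccessible κ₂] (hC : ∀ X : C, IsPresentable.{v} X) :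
    ∃ (lam : Cardinal.{v}) (_ : Fact lam.IsRegular), IsCardinalAccessibleCategory A lam ∧
      IsCardinalAccessibleCategory (IsoComma F G) lam ∧
      ((isoP F G).ι ⋙ Comma.fst F G).IsCardinalAccessible lam := by
  obtain ⟨ν₁, hν₁, r₁⟩ := raise F κ₁ hC
  obtain ⟨ν₂, hν₂, r₂⟩ := raise G κ₂ hC
  have hκ₁ : κ₁.IsRegular := Fact.out
  let ν := max ν₁ ν₂
  have h1 : ν₁ ≤ ν := le_max_left _ _
  have h2 : ν₂ ≤ ν := le_max_right _ _
  have h0 : Cardinal.aleph0 ≤ ν := hκ₁.aleph0_le.trans (hν₁.trans h1)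
  let κ : Cardinal.{v} := Order.succ (2 ^ ν)
  have fκ : Fact κ.IsRegular := fact_succ h0
  have hνκ : ν ≤ κ := (Cardinal.cantor ν).le.trans (Order.le_succ _)
  have h0κ : Cardinal.aleph0 ≤ κ := h0.trans hνκ
  let lam : Cardinal.{v} := Order.succ (2 ^ κ)
  have flam : Fact lam.IsRegular := fact_succ h0κ
  have hκlam : κ ≤ lam := (Cardinal.cantor κ).le.trans (Order.le_succ _)
  obtain ⟨QA, _, hQA, hFA⟩ := r₁ ν h1
  obtain ⟨QB, _, hQB, hGB⟩ := r₂ ν h2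
  obtain ⟨QA', _, hQA', _⟩ := r₁ κ (h1.trans hνκ)
  obtain ⟨QB', _, hQB', _⟩ := r₂ κ (h2.trans hνκ)
  have hk1 : κ₁ ≤ κ := hν₁.trans (h1.trans hνκ)
  have hk2 : κ₂ ≤ κ := hν₂.trans (h2.trans hνκ)
  have : HasCardinalFilteredColimits.{v} A κ := hasCardinalFilteredColimits_of_le' hk1
  have : HasCardinalFilteredColimits.{v} B κ := hasCardinalFilteredColimits_of_le' hk2
  have : F.IsCardinalAccessible κ := F.isCardinalAccessible_of_le hk1
  have : G.IsCardinalAccessible κ := G.isCardinalAccessible_of_le hk2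
  have : HasCardinalFilteredColimits.{v} A lam := hasCardinalFilteredColimits_of_le' hκlam
  have : HasCardinalFilteredColimits.{v} B lam := hasCardinalFilteredColimits_of_le' hκlam
  have : F.IsCardinalAccessible lam := F.isCardinalAccessible_of_le hκlam
  have : G.IsCardinalAccessible lam := G.isCardinalAccessible_of_le hκlam
  have gA : HasCardinalFilteredGenerator A lam := hQA'.hasCardinalFilteredGenerator
  have gB : HasCardinalFilteredGenerator B lam := hQB'.hasCardinalFilteredGenerator
  have sm := presP_small F G lam
  have gen : (presP F G lam).IsCardinalFilteredGenerator lam :=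
    { le_isCardinalPresentable := fun e he => isoComma_presentable F G lam e he.1 he.2.1 he.2.2
      exists_colimitsOfShape := fun e => by
        obtain ⟨J, _, hJ, T, t, ⟨ht⟩, hT⟩ := key_obj F G κ (2 ^ κ) (Cardinal.cantor κ).le
          (pow_le_aux h0κ le_rfl) hQA hQB hFA hGB e
        exact ⟨J, inferInstance, hJ, ⟨{ diag := T, ι := t, isColimit := ht, prop_diag_obj := hT }⟩⟩ }
  have gE : HasCardinalFilteredGenerator (IsoComma F G) lam := gen.hasCardinalFilteredGenerator
  have shp : ∀ (J : Type v) [SmallCategory J] [IsCardinalFiltered J lam],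
      HasColimitsOfShape J (IsoComma F G) ∧
        PreservesColimitsOfShape J ((isoP F G).ι ⋙ Comma.fst F G) := fun J _ _ => by
    have := HasCardinalFilteredColimits.hasColimitsOfShape (κ := lam) A J
    have := HasCardinalFilteredColimits.hasColimitsOfShape (κ := lam) B J
    have := F.preservesColimitsOfShape_of_isCardinalAccessible lam J
    have := G.preservesColimitsOfShape_of_isCardinalAccessible lam J
    have := (isoComma_hasColimits F G J).2
    exact ⟨(isoComma_hasColimits F G J).1, inferInstance⟩
  have : HasCardinalFilteredColimits.{v} (IsoComma F G) lam := ⟨fun J _ _ => (shp J).1⟩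
  exact ⟨lam, flam, { }, { }, ⟨fun J _ _ => (shp J).2⟩⟩

end Access

section Translate

lemma directed_iff (κ : Cardinal.{v}) [Fact κ.IsRegular] (J : Type v) [Preorder J] :
    IsCardinalDirected κ J ↔ IsCardinalFiltered J κ := by
  constructor
  · intro h
    apply isCardinalFiltered_preorder
    intro K s hK
    obtain ⟨j, hj⟩ := h (Set.range s) (Cardinal.mk_range_le.trans_lt hK)
    exact ⟨j, fun k => hj _ ⟨k, rfl⟩⟩
  · intro h S hS
    have hS' := (hasCardinalLT_iff_cardinal_mk_lt S κ).2 hS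
    exact ⟨IsCardinalFiltered.max (fun x : S => (x : J)) hS', fun s hs =>
      leOfHom (IsCardinalFiltered.toMax (fun x : S => (x : J)) hS' ⟨s, hs⟩)⟩

lemma preserves_iff (κ : Cardinal.{v}) [Fact κ.IsRegular] {A : Type u₁} [Category.{v} A]
    {C : Type u₂} [Category.{v} C] (F : A ⥤ C) :
    (∀ (J : Type v) [Preorder J], IsCardinalDirected κ J →
      Nonempty (PreservesColimitsOfShape J F)) ↔ F.IsCardinalAccessible κ := by
  constructor
  · intro h
    refine ⟨fun J _ _ => ?_⟩
    obtain ⟨α, _, _, T, _⟩ := IsCardinalFiltered.exists_cardinal_directed J κ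
    obtain ⟨h'⟩ := h α ((directed_iff κ α).2 inferInstance)
    exact Functor.Final.preservesColimitsOfShape_of_final T F
  · intro h J _ hJ
    have := (directed_iff κ J).1 hJ
    exact ⟨F.preservesColimitsOfShape_of_isCardinalAccessible κ J⟩

lemma presentable_iff (κ : Cardinal.{v}) [Fact κ.IsRegular] {A : Type u₁} [Category.{v} A]
    (X : A) : IsPresentableObj κ X ↔ IsCardinalPresentable X κ :=
  preserves_iff κ (coyoneda.obj (op X))

lemma IsCardinalAccessible.toMathlib {κ : Cardinal.{v}} [Fact κ.IsRegular] {K : Type u₁}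
    [Category.{v} K] (h : IsCardinalAccessible κ K) : IsCardinalAccessibleCategory K κ := by
  obtain ⟨S, _, hS, hX⟩ := h.generators
  let Q : ObjectProperty K := fun X => X ∈ S
  have : ObjectProperty.Small.{v} Q := ‹Small.{v} S›
  have gen : Q.IsCardinalFilteredGenerator κ :=
    { le_isCardinalPresentable := fun X hX => (presentable_iff κ X).1 (hS X hX)
      exists_colimitsOfShape := fun X => by
        obtain ⟨J, _, hJ, D, c, ⟨hc⟩, rfl, hD⟩ := hX X
        exact ⟨J, inferInstance, (directed_iff κ J).1 hJ,
          ⟨{ diag := D, ι := c.ι, isColimit := hc, prop_diag_obj := hD }⟩⟩ }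
  have h1 : HasCardinalFilteredGenerator K κ := gen.hasCardinalFilteredGenerator
  have h2 : HasCardinalFilteredColimits.{v} K κ := ⟨fun J _ _ => by
    obtain ⟨α, _, _, T, _⟩ := IsCardinalFiltered.exists_cardinal_directed J κ
    have := h.hasDirectedColimits α ((directed_iff κ α).2 inferInstance)
    exact Functor.Final.hasColimitsOfShape_of_final T⟩
  exact { }

lemma IsCardinalAccessible.ofMathlib {κ : Cardinal.{v}} [Fact κ.IsRegular] {K : Type u₁}
    [Category.{v} K] [IsCardinalAccessibleCategory K κ] : IsCardinalAccessible κ K where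
  isRegular := Fact.out
  hasDirectedColimits J _ hJ := by
    have := (directed_iff κ J).1 hJ
    exact HasCardinalFilteredColimits.hasColimitsOfShape (κ := κ) K J
  generators := by
    obtain ⟨Q, hs, hQ⟩ := HasCardinalFilteredGenerator.exists_small_generator K κ
    refine ⟨{X | Q X}, hs, fun X hX => (presentable_iff κ X).2 (hQ.le_isCardinalPresentable X hX),
      fun X => ?_⟩
    obtain ⟨J, _, hJ, D, t, hc, hD⟩ := exists_poset_presentation κ hQ X
    exact ⟨J, inferInstance, (directed_iff κ J).2 hJ, D, Cocone.mk X t, hc, rfl, hD⟩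

end Translate

/-- if `F : A ⥤ C` is an accessible functor and `K ⊆ C` is an
isomorphism-closed full subcategory which is the full image of an accessible functor,
then the full preimage `F⁻¹K` is also isomorphism-closed and the full image of an
accessible functor. Full subcategories are represented by their sets of objects. -/
theorem statement12 {A : Type u₁} [Category.{v} A] {C : Type u₂} [Category.{v} C]
    (F : A ⥤ C) (hF : IsAccessibleFunctor F)
    (P : Set C)
    (hiso : ∀ ⦃X Y : C⦄, (X ≅ Y) → X ∈ P → Y ∈ P)
    (himg : ∃ (B : Cat.{v, u₃}) (G : B ⥤ C), IsAccessibleFunctor G ∧ Set.range G.obj = P) :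
    (∀ ⦃X Y : A⦄, (X ≅ Y) → F.obj X ∈ P → F.obj Y ∈ P) ∧
    ∃ (B' : Cat.{v, max u₁ u₃ v}) (G' : B' ⥤ A),
      IsAccessibleFunctor G' ∧ Set.range G'.obj = { X : A | F.obj X ∈ P } := by
  refine ⟨fun X Y e hX => hiso (F.mapIso e) hX, ?_⟩
  obtain ⟨B, G, ⟨κ₂, hB, -, hG⟩, rfl⟩ := himg
  obtain ⟨κ₁, hA, hC, hF⟩ := hF
  have : Fact κ₁.IsRegular := ⟨hA.isRegular⟩
  have : Fact κ₂.IsRegular := ⟨hB.isRegular⟩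
  have := hA.toMathlib
  have := hB.toMathlib
  have := hC.toMathlib
  have := (preserves_iff κ₁ F).1 hF
  have := (preserves_iff κ₂ G).1 hG
  have hCp : ∀ X : C, IsPresentable.{v} X := fun X => by
    obtain ⟨Q, _, hQ⟩ := HasCardinalFilteredGenerator.exists_generator C κ₁
    exact hQ.presentable X
  obtain ⟨lam, _, h1, h2, h3⟩ := isoComma_accessible F G κ₁ κ₂ hCp
  have a1 : IsCardinalAccessible lam (IsoComma F G) := IsCardinalAccessible.ofMathlib
  refine ⟨Cat.of (IsoComma F G), (isoP F G).ι ⋙ Comma.fst F G, ⟨lam,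
    a1, IsCardinalAccessible.ofMathlib,
    (preserves_iff lam _).2 h3⟩, ?_⟩
  ext X
  constructor
  · rintro ⟨e, rfl⟩
    have : IsIso e.obj.hom := e.property
    exact hiso (asIso e.obj.hom).symm ⟨_, rfl⟩
  · rintro ⟨Y, hY⟩
    exact ⟨⟨⟨X, Y, eqToHom hY.symm⟩, inferInstanceAs (IsIso (eqToHom hY.symm))⟩, rfl⟩

end Paper
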